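/- Let p be a positive rational number with √p irrational, and let x₁ = a₁ + b₁√p, …, xₙ = aₙ + bₙ√p where each xᵢ > 0 and all aᵢ, bᵢ are rational. Suppose aᵢ − bᵢ√p < 0 for every i ∈ {1, …, n} (so each bᵢ > 0). Then a positive real number z belongs to B(x₁, …, xₙ) if and only if z = e + f√p with e, f ∈ ℚ, f > 0, and |e|/f ≤ max_{1 ≤ i ≤ n} |aᵢ|/bᵢ. -/

import Mathlib

/-- `R` is an axis-parallel closed rectangle with side lengths `w` (horizontal)
and `h` (vertical), both positive. -/
def IsRect (R : Set (ℝ × ℝ)) (w h : ℝ) : Prop :=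
  0 < w ∧ 0 < h ∧ ∃ x y : ℝ, R = Set.Icc x (x + w) ×ˢ Set.Icc y (y + h)

/-- The rectangle `R` is tiled by finitely many axis-parallel rectangles, each of
whose side ratios belongs to `ratios`: the tiles cover `R` and have pairwise
disjoint interiors. -/
def TiledBy (R : Set (ℝ × ℝ)) (ratios : Set ℝ) : Prop :=
  ∃ (m : ℕ) (T : Fin m → Set (ℝ × ℝ)) (w h : Fin m → ℝ),
    (∀ i, IsRect (T i) (w i) (h i)) ∧
    (∀ i, w i / h i ∈ ratios ∨ h i / w i ∈ ratios) ∧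
    (⋃ i, T i) = R ∧
    Pairwise fun i j => Disjoint (interior (T i)) (interior (T j))

/-- `BSet ratios` is the set of positive reals `z` such that some axis-parallel
rectangle with side ratio `z` can be tiled by finitely many axis-parallel
rectangles each of whose side ratio belongs to `ratios`. -/
def BSet (ratios : Set ℝ) : Set ℝ :=
  {z | ∃ (W H : ℝ) (R : Set (ℝ × ℝ)),
    IsRect R W H ∧ (z = W / H ∨ z = H / W) ∧ TiledBy R ratios}

/-!
A tiling of a `w × h` rectangle by `wᵢ × hᵢ` rectangles forces `∑ wᵢ ⊗ hᵢ = w ⊗ h` in `ℝ ⊗[ℚ] ℝ`: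
integrate the almost everywhere identity of indicator functions over vertical slices, apply a
`ℚ`-linear functional to the resulting identity, and integrate again. Hence a `ℚ`-bilinear form that
is nonnegative on every admissible tile is nonnegative on every rectangle they tile.

Put `s = √p`, and let `U`, `V` be `ℚ`-linear with `U (s u) = s U u` and `V (s u) = -s V u`; the
values `U 1` and `V 1` can be prescribed because `1` and `s` are linearly independent over `ℚ`. For
`r = a + b s`, the form `Φ(u, v) = δ (U u U v - V u V v) + κ (U u V v + V u U v)` has
`Φ(r u, u) = δ (b s + a) X² + 2 κ a X Y + δ (b s - a) Y²` with `X = U u`, `Y = V u`. If `|a| ≤ b s`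
and `δ ≥ 0`, this is nonnegative for all `X`, `Y` exactly when `(κ a)² ≤ δ² ((b s)² - a²)`.
Let `k` maximise `|aᵢ| / bᵢ` over the ratios used, and take `δ = |aₖ|` and `κ² = (bₖ s)² - aₖ²`:
then `Φ` is nonnegative on the tiles, hence at `(z, 1)`, and for `z = e + f s` this says
`|e| / f ≤ |aₖ| / bₖ`, where `f > 0` follows from the case `δ = 1`, `κ = 0`. If `z ∉ ℚ + ℚ s`, a
suitable choice of `U` and `V` gives `Φ(z, 1) < 0` for `δ = 1`, `κ = 0`.

Conversely, attainable ratios are closed under inversion, addition and multiplication by positive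
rationals. So `a + b s` yields `-a + b s = (p b² - a²) (a + b s)⁻¹`, and the nonnegative rational
combinations of these two are the `e + f s` with `|e| / f ≤ |a| / b`.
-/

open MeasureTheory Set
open scoped TensorProduct

/-! ### Tilings and tensor products -/

lemma indicator_const_apply_eq_mul {α M : Type*} [MulZeroOneClass M] (s : Set α) (c : M) (x : α) :
    s.indicator (fun _ => c) x = c * s.indicator 1 x := by
  simpa using indicator_const_mul s (1 : α → M) c x

lemma sum_measureReal_smul_eq {α E ι : Type*} [MeasurableSpace α] [NormedAddCommGroup E]
    [NormedSpace ℝ E] [CompleteSpace E] [Fintype ι] {μ : Measure α} {A : ι → Set α} {A₀ : Set α}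
    (hA : ∀ i, MeasurableSet (A i)) (hA₀ : MeasurableSet A₀) (hμA : ∀ i, μ (A i) ≠ ⊤)
    {c : ι → E} {c₀ : E}
    (h : ∀ᵐ x ∂μ, ∑ i, (A i).indicator (fun _ => c i) x = A₀.indicator (fun _ => c₀) x) :
    ∑ i, μ.real (A i) • c i = μ.real A₀ • c₀ := by
  have hint (i : ι) : Integrable ((A i).indicator fun _ => c i) μ :=
    (integrable_indicator_iff (hA i)).2 (integrableOn_const (hμA i))
  calc ∑ i, μ.real (A i) • c i
    _ = ∫ x, ∑ i, (A i).indicator (fun _ => c i) x ∂μ := by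
      rw [integral_finsetSum _ fun i _ => hint i]
      exact Finset.sum_congr rfl fun i _ => (integral_indicator_const (c i) (hA i)).symm
    _ = μ.real A₀ • c₀ := by rw [integral_congr_ae h, integral_indicator_const c₀ hA₀]

theorem sum_measureReal_tmul_measureReal_eq {α β ι : Type*} [MeasurableSpace α]
    [MeasurableSpace β] [Fintype ι] {μ : Measure α} {ν : Measure β} [SFinite ν]
    {A : ι → Set α} {B : ι → Set β} {A₀ : Set α} {B₀ : Set β}
    (hA : ∀ i, MeasurableSet (A i)) (hA₀ : MeasurableSet A₀) (hμA : ∀ i, μ (A i) ≠ ⊤)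
    (hB : ∀ i, MeasurableSet (B i)) (hB₀ : MeasurableSet B₀) (hνB : ∀ i, ν (B i) ≠ ⊤)
    (h : ∀ᵐ q ∂μ.prod ν,
      ∑ i, (A i ×ˢ B i).indicator (1 : α × β → ℝ) q = (A₀ ×ˢ B₀).indicator 1 q) :
    ∑ i, μ.real (A i) ⊗ₜ[ℚ] ν.real (B i) = μ.real A₀ ⊗ₜ[ℚ] ν.real B₀ := by
  have slices : ∀ᵐ x ∂μ, ∑ i, (A i).indicator (fun _ => ν.real (B i)) x =
      A₀.indicator (fun _ => ν.real B₀) x := by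
    filter_upwards [Measure.ae_ae_of_ae_prod h] with x hx
    have hBx := sum_measureReal_smul_eq hB hB₀ hνB (c := fun i => (A i).indicator (1 : α → ℝ) x)
      (c₀ := A₀.indicator 1 x) <| by
        simpa only [indicator_const_apply_eq_mul, indicator_prod_one] using hx
    simpa only [indicator_const_apply_eq_mul, smul_eq_mul] using hBx
  let b := Module.Free.chooseBasis ℚ ℝ
  apply (TensorProduct.equivFinsuppOfBasisRight b).injective
  ext k
  let g : ℝ →ₗ[ℚ] ℝ := Algebra.linearMap ℚ ℝ ∘ₗ b.coord k
  have hk : ∀ᵐ x ∂μ, ∑ i, (A i).indicator (fun _ => g (ν.real (B i))) x =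
      A₀.indicator (fun _ => g (ν.real B₀)) x := by
    filter_upwards [slices] with x hx
    simpa only [map_sum, map_indicator, Function.comp_def] using congrArg g hx
  simpa [g, Rat.smul_def, mul_comm] using sum_measureReal_smul_eq hA hA₀ hμA hk

lemma ae_sum_indicator_eq_indicator_iUnion {X ι : Type*} [TopologicalSpace X] [MeasurableSpace X]
    [Fintype ι] {μ : Measure X} {T : ι → Set X} (hT : ∀ i, μ (frontier (T i)) = 0)
    (hd : Pairwise fun i j => Disjoint (interior (T i)) (interior (T j))) :
    ∀ᵐ q ∂μ, ∑ i, (T i).indicator (1 : X → ℝ) q = (⋃ i, T i).indicator 1 q := by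
  have hfr : ∀ᵐ q ∂μ, ∀ i, q ∉ frontier (T i) :=
    ae_all_iff.2 fun i => measure_eq_zero_iff_ae_notMem.1 (hT i)
  filter_upwards [hfr] with q hq
  have hint (i : ι) (hi : q ∈ T i) : q ∈ interior (T i) := by
    by_contra hqi
    exact hq i ⟨subset_closure hi, hqi⟩
  by_cases hex : ∃ i, q ∈ T i
  · obtain ⟨i, hi⟩ := hex
    have hne (j : ι) (hj : j ≠ i) : q ∉ T j := fun hqj =>
      disjoint_left.1 (hd hj) (hint j hqj) (hint i hi)
    rw [indicator_of_mem (mem_iUnion.2 ⟨i, hi⟩),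
      Finset.sum_eq_single i (fun j _ hj => indicator_of_notMem (hne j hj) _) (by simp),
      indicator_of_mem hi, Pi.one_apply]
  · rw [indicator_of_notMem (by simpa using hex)]
    exact Finset.sum_eq_zero fun i _ => indicator_of_notMem (fun hi => hex ⟨i, hi⟩) _

section Rectangles

variable {R R' : Set (ℝ × ℝ)} {S : Set ℝ} {w h w' h' : ℝ}

lemma isRect_Icc_prod_Icc (hw : 0 < w) (hh : 0 < h) (x y : ℝ) :
    IsRect (Icc x (x + w) ×ˢ Icc y (y + h)) w h :=
  ⟨hw, hh, x, y, rfl⟩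

lemma IsRect.image_affine (hR : IsRect R w h) {c : ℝ} (hc : 0 < c) (d d' : ℝ) :
    IsRect ((affineHomeomorph c d hc.ne').prodCongr (affineHomeomorph c d' hc.ne') '' R)
      (c * w) (c * h) := by
  obtain ⟨hw, hh, x, y, rfl⟩ := hR
  refine ⟨mul_pos hc hw, mul_pos hc hh, c * x + d, c * y + d', ?_⟩
  rw [Homeomorph.coe_prodCongr, prodMap_image_prod, affineHomeomorph_image_Icc _ _ _ _ hc,
    affineHomeomorph_image_Icc _ _ _ _ hc]
  congr 2 <;> ring

lemma IsRect.image_swap (hR : IsRect R w h) : IsRect (Homeomorph.prodComm ℝ ℝ '' R) h w := by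
  obtain ⟨hw, hh, x, y, rfl⟩ := hR
  exact ⟨hh, hw, y, x, image_swap_prod _ _⟩

lemma IsRect.exists_image_affine_eq (hR : IsRect R w h) {c : ℝ} (hc : 0 < c)
    (hR' : IsRect R' (c * w) (c * h)) :
    ∃ d d', (affineHomeomorph c d hc.ne').prodCongr (affineHomeomorph c d' hc.ne') '' R = R' := by
  obtain ⟨-, -, x, y, rfl⟩ := hR
  obtain ⟨-, -, x', y', rfl⟩ := hR'
  refine ⟨x' - c * x, y' - c * y, ?_⟩
  rw [Homeomorph.coe_prodCongr, prodMap_image_prod, affineHomeomorph_image_Icc _ _ _ _ hc,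
    affineHomeomorph_image_Icc _ _ _ _ hc]
  congr 2 <;> ring

theorem sum_tmul_eq_tmul_of_isRect {ι : Type*} [Fintype ι] {T : ι → Set (ℝ × ℝ)} {u v : ι → ℝ}
    (hT : ∀ i, IsRect (T i) (u i) (v i)) (hU : IsRect (⋃ i, T i) w h)
    (hd : Pairwise fun i j => Disjoint (interior (T i)) (interior (T j))) :
    ∑ i, u i ⊗ₜ[ℚ] v i = w ⊗ₜ[ℚ] h := by
  choose hu hv x y hxy using hT
  obtain ⟨hw, hh, x₀, y₀, hR⟩ := hU
  have hcover : ∀ᵐ q : ℝ × ℝ, ∑ i, (T i).indicator (1 : ℝ × ℝ → ℝ) q =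
      (⋃ i, T i).indicator 1 q := by
    refine ae_sum_indicator_eq_indicator_iUnion (fun i => ?_) hd
    rw [hxy]
    exact ((convex_Icc _ _).prod (convex_Icc _ _)).addHaar_frontier volume
  rw [hR] at hcover
  simp only [hxy, Measure.volume_eq_prod] at hcover
  have key := sum_measureReal_tmul_measureReal_eq (fun _ => measurableSet_Icc) measurableSet_Icc
    (fun _ => measure_Icc_lt_top.ne) (fun _ => measurableSet_Icc) measurableSet_Icc
    (fun _ => measure_Icc_lt_top.ne) hcover
  simpa [Real.volume_real_Icc, (hu _).le, (hv _).le, hw.le, hh.le] using key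

/-! ### Attainable side ratios -/

/-- The admissible tiles: axis-parallel rectangles with a side ratio in `S`. -/
def IsTile (S : Set ℝ) (T : Set (ℝ × ℝ)) : Prop :=
  ∃ w h, IsRect T w h ∧ (w / h ∈ S ∨ h / w ∈ S)

lemma IsTile.image_affine {T : Set (ℝ × ℝ)} (hT : IsTile S T) {c : ℝ} (hc : 0 < c) (d d' : ℝ) :
    IsTile S ((affineHomeomorph c d hc.ne').prodCongr (affineHomeomorph c d' hc.ne') '' T) := by
  obtain ⟨w, h, hR, hS⟩ := hT
  refine ⟨c * w, c * h, hR.image_affine hc d d', ?_⟩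
  rwa [mul_div_mul_left _ _ hc.ne', mul_div_mul_left _ _ hc.ne']

lemma IsTile.image_swap {T : Set (ℝ × ℝ)} (hT : IsTile S T) :
    IsTile S (Homeomorph.prodComm ℝ ℝ '' T) := by
  obtain ⟨w, h, hR, hS⟩ := hT
  exact ⟨h, w, hR.image_swap, hS.symm⟩

lemma tiledBy_iff_exists_isTile : TiledBy R S ↔ ∃ (m : ℕ) (T : Fin m → Set (ℝ × ℝ)),
    (∀ i, IsTile S (T i)) ∧ (⋃ i, T i) = R ∧
      Pairwise fun i j => Disjoint (interior (T i)) (interior (T j)) := by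
  constructor
  · rintro ⟨m, T, w, h, hT, hS, hU, hd⟩
    exact ⟨m, T, fun i => ⟨w i, h i, hT i, hS i⟩, hU, hd⟩
  · rintro ⟨m, T, hT, hU, hd⟩
    choose w h hT hS using hT
    exact ⟨m, T, w, h, hT, hS, hU, hd⟩

lemma tiledBy_iUnion {ι : Type*} [Finite ι] {T : ι → Set (ℝ × ℝ)} (hT : ∀ i, IsTile S (T i))
    (hd : Pairwise fun i j => Disjoint (interior (T i)) (interior (T j))) :
    TiledBy (⋃ i, T i) S := by
  obtain ⟨m, ⟨e⟩⟩ := Finite.exists_equiv_fin ι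
  exact tiledBy_iff_exists_isTile.2 ⟨m, T ∘ e.symm, fun i => hT _,
    e.symm.surjective.iUnion_comp T, fun i j hij => hd (e.symm.injective.ne hij)⟩

lemma IsTile.tiledBy (hR : IsTile S R) : TiledBy R S := by
  simpa only [iUnion_const] using
    tiledBy_iUnion (ι := Unit) (fun _ => hR) fun i j hij => (hij (Subsingleton.elim i j)).elim

lemma TiledBy.union (hR : TiledBy R S) (hR' : TiledBy R' S)
    (hd : Disjoint (interior R) (interior R')) : TiledBy (R ∪ R') S := by
  obtain ⟨m, T, hT, rfl, hTd⟩ := tiledBy_iff_exists_isTile.1 hR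
  obtain ⟨m', T', hT', rfl, hTd'⟩ := tiledBy_iff_exists_isTile.1 hR'
  have hTT' (i j) : Disjoint (interior (T i)) (interior (T' j)) :=
    hd.mono (interior_mono (subset_iUnion T i)) (interior_mono (subset_iUnion T' j))
  have hU : (⋃ i, T i) ∪ (⋃ i, T' i) = ⋃ i, Sum.elim T T' i := by simp [iUnion_sum]
  rw [hU]
  refine tiledBy_iUnion (Sum.rec hT hT') ?_
  rintro (i | i) (j | j) hij
  · exact hTd (ne_of_apply_ne Sum.inl hij)
  · exact hTT' i j
  · exact (hTT' j i).symm
  · exact hTd' (ne_of_apply_ne Sum.inr hij)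

lemma TiledBy.image (hR : TiledBy R S) (e : (ℝ × ℝ) ≃ₜ (ℝ × ℝ))
    (he : ∀ T, IsTile S T → IsTile S (e '' T)) : TiledBy (e '' R) S := by
  obtain ⟨m, T, hT, rfl, hd⟩ := tiledBy_iff_exists_isTile.1 hR
  rw [image_iUnion]
  refine tiledBy_iUnion (fun i => he _ (hT i)) fun i j hij => ?_
  change Disjoint (interior _) (interior _)
  rw [← e.image_interior, ← e.image_interior]
  exact (disjoint_image_iff e.injective).2 (hd hij)

lemma TiledBy.of_similar (hT : TiledBy R S) (hR : IsRect R w h) {c : ℝ} (hc : 0 < c)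
    (hR' : IsRect R' (c * w) (c * h)) : TiledBy R' S := by
  obtain ⟨d, d', rfl⟩ := hR.exists_image_affine_eq hc hR'
  exact hT.image _ fun T hT => hT.image_affine hc d d'

end Rectangles

/-- Some axis-parallel rectangle of width `w` and height `h` can be tiled by rectangles with side
ratios in `S`; by translation invariance, all of them can. -/
def Tileable (S : Set ℝ) (w h : ℝ) : Prop :=
  ∃ R, IsRect R w h ∧ TiledBy R S

namespace Tileable

variable {S : Set ℝ} {w w' h z : ℝ}

lemma width_pos (H : Tileable S w h) : 0 < w := by
  obtain ⟨R, hR, -⟩ := H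
  exact hR.1

lemma height_pos (H : Tileable S w h) : 0 < h := by
  obtain ⟨R, hR, -⟩ := H
  exact hR.2.1

lemma mul_left (H : Tileable S w h) {c : ℝ} (hc : 0 < c) : Tileable S (c * w) (c * h) := by
  obtain ⟨R, hR, hT⟩ := H
  have hR' := isRect_Icc_prod_Icc (mul_pos hc hR.1) (mul_pos hc hR.2.1) 0 0
  exact ⟨_, hR', hT.of_similar hR hc hR'⟩

lemma tiledBy (H : Tileable S w h) {R : Set (ℝ × ℝ)} (hR : IsRect R w h) : TiledBy R S := by
  obtain ⟨R', hR', hT⟩ := H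
  exact hT.of_similar hR' one_pos (by simpa only [one_mul] using hR)

lemma swap (H : Tileable S w h) : Tileable S h w := by
  obtain ⟨R, hR, hT⟩ := H
  exact ⟨_, hR.image_swap, hT.image _ fun T => IsTile.image_swap⟩

lemma div_one (H : Tileable S w h) : Tileable S (w / h) 1 := by
  have := H.mul_left (inv_pos.2 H.height_pos)
  rwa [inv_mul_cancel₀ H.height_pos.ne', inv_mul_eq_div] at this

lemma add (H : Tileable S w h) (H' : Tileable S w' h) : Tileable S (w + w') h := by
  have hw := H.width_pos
  have hw' := H'.width_pos
  have hh := H.height_pos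
  refine ⟨_, isRect_Icc_prod_Icc (add_pos hw hw') hh 0 0, ?_⟩
  have hsplit : Icc (0 : ℝ) (0 + (w + w')) ×ˢ Icc (0 : ℝ) (0 + h) =
      Icc 0 (0 + w) ×ˢ Icc 0 (0 + h) ∪ Icc (0 + w) (0 + w + w') ×ˢ Icc 0 (0 + h) := by
    rw [← union_prod, Icc_union_Icc_eq_Icc (by linarith) (by linarith), add_assoc]
  rw [hsplit]
  refine (H.tiledBy (isRect_Icc_prod_Icc hw hh _ _)).union
    (H'.tiledBy (isRect_Icc_prod_Icc hw' hh _ _)) ?_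
  simp only [interior_prod_eq, interior_Icc]
  exact Disjoint.set_prod_left (Ioo_disjoint_Ioo.2 (by simp)) _ _

lemma inv (H : Tileable S z 1) : Tileable S z⁻¹ 1 := by
  simpa only [one_div] using H.swap.div_one

lemma of_mem (hz : 0 < z) (hS : z ∈ S) : Tileable S z 1 :=
  have hR := isRect_Icc_prod_Icc hz one_pos 0 0
  ⟨_, hR, IsTile.tiledBy ⟨z, 1, hR, Or.inl (by rwa [_root_.div_one])⟩⟩

lemma natCast_mul (H : Tileable S z 1) {n : ℕ} (hn : 0 < n) : Tileable S (n * z) 1 := by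
  induction n, hn using Nat.le_induction with
  | base => simpa only [Nat.cast_succ, Nat.cast_zero, zero_add, one_mul] using H
  | succ n _ ih => simpa only [Nat.cast_succ, add_one_mul] using ih.add H

lemma ratCast_mul (H : Tileable S z 1) {q : ℚ} (hq : 0 < q) : Tileable S (q * z) 1 := by
  have hnum : 0 < q.num.toNat := Int.pos_iff_toNat_pos.1 (Rat.num_pos.2 hq)
  have hdiv := (H.natCast_mul hnum).inv.natCast_mul q.den_pos |>.inv
  have hq' : (q : ℝ) = (q.num.toNat : ℝ) / q.den := by
    rw [← Int.cast_natCast, Int.toNat_of_nonneg (Rat.num_pos.2 hq).le, ← Rat.cast_def]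
  convert hdiv using 1
  rw [hq', mul_inv, inv_inv]
  ring

lemma ratCast_mul_add_ratCast_mul (H : Tileable S z 1) {z' : ℝ} (H' : Tileable S z' 1) {q q' : ℚ}
    (hq : 0 ≤ q) (hq' : 0 ≤ q') (hpos : 0 < q + q') : Tileable S (q * z + q' * z') 1 := by
  rcases hq.eq_or_lt with rfl | hq
  · simpa using H'.ratCast_mul (by simpa using hpos)
  rcases hq'.eq_or_lt with rfl | hq'
  · simpa using H.ratCast_mul hq
  exact (H.ratCast_mul hq).add (H'.ratCast_mul hq')

lemma bilin_nonneg (H : Tileable S w h) (Φ : ℝ →ₗ[ℚ] ℝ →ₗ[ℚ] ℝ)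
    (hΦ : ∀ u v, 0 < u → 0 < v → u / v ∈ S → 0 ≤ Φ u v ∧ 0 ≤ Φ v u) : 0 ≤ Φ w h := by
  obtain ⟨R, hR, m, T, u, v, hT, hS, rfl, hd⟩ := H
  have hsum : ∑ i, Φ (u i) (v i) = Φ w h := by
    simpa only [map_sum, TensorProduct.lift.tmul] using
      congrArg (TensorProduct.lift Φ) (sum_tmul_eq_tmul_of_isRect hT hR hd)
  rw [← hsum]
  refine Finset.sum_nonneg fun i _ => ?_
  rcases hS i with hi | hi
  · exact (hΦ _ _ (hT i).1 (hT i).2.1 hi).1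
  · exact (hΦ _ _ (hT i).2.1 (hT i).1 hi).2

lemma exists_finset_image {ι : Type*} {x : ι → ℝ} (H : Tileable (range x) w h) :
    ∃ t : Finset ι, t.Nonempty ∧ Tileable (x '' t) w h := by
  classical
  obtain ⟨R, hR, m, T, u, v, hT, hS, rfl, hd⟩ := H
  have hm : Nonempty (Fin m) := by
    obtain ⟨hw, hh, x₀, y₀, hR⟩ := hR
    have hmem : (x₀, y₀) ∈ ⋃ i, T i := by
      rw [hR]
      exact ⟨left_mem_Icc.2 (by linarith), left_mem_Icc.2 (by linarith)⟩
    exact (mem_iUnion.1 hmem).nonempty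
  have hj (i : Fin m) : ∃ j, u i / v i = x j ∨ v i / u i = x j := by
    rcases hS i with ⟨j, hj⟩ | ⟨j, hj⟩
    exacts [⟨j, Or.inl hj.symm⟩, ⟨j, Or.inr hj.symm⟩]
  choose j hj using hj
  refine ⟨Finset.univ.image j, Finset.univ_nonempty.image j, _, hR, m, T, u, v, hT,
    fun i => ?_, rfl, hd⟩
  have hji : x (j i) ∈ x '' (Finset.univ.image j : Finset ι) :=
    mem_image_of_mem x (by simp)
  exact (hj i).imp (fun h => by rwa [h]) (fun h => by rwa [h])

end Tileable

lemma mem_BSet_iff_tileable {S : Set ℝ} {z : ℝ} : z ∈ BSet S ↔ Tileable S z 1 := by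
  constructor
  · rintro ⟨W, H, R, hR, rfl | rfl, hT⟩
    · exact Tileable.div_one ⟨R, hR, hT⟩
    · exact (Tileable.swap ⟨R, hR, hT⟩).div_one
  · rintro ⟨R, hR, hT⟩
    exact ⟨z, 1, R, hR, Or.inl (div_one z).symm, hT⟩

/-! ### Conjugation forms -/

lemma exists_linearMap_apply_eq {K V W ι : Type*} [Field K] [AddCommGroup V] [Module K V]
    [AddCommGroup W] [Module K W] {v : ι → V} (hv : LinearIndependent K v) (c : ι → W) :
    ∃ F : V →ₗ[K] W, ∀ i, F (v i) = c i := by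
  obtain ⟨G, hG⟩ := LinearMap.exists_leftInverse_of_injective
    (Finsupp.linearCombination K v) (LinearMap.ker_eq_bot.2 hv)
  refine ⟨Finsupp.linearCombination K c ∘ₗ G, fun i => ?_⟩
  have hGv : G (v i) = Finsupp.single i 1 := by
    simpa using LinearMap.congr_fun hG (Finsupp.single i 1)
  simp [hGv]

section ConjugationForms

/-- The `ℚ`-linear map `u ↦ l (s * u) + c * l u`. When `s ^ 2 = c ^ 2` is rational, it intertwines
multiplication by `s` with multiplication by `c`. -/
noncomputable def eigenmap (s c : ℝ) (l : ℝ →ₗ[ℚ] ℝ) : ℝ →ₗ[ℚ] ℝ :=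
  l ∘ₗ LinearMap.mulLeft ℚ s + c • l

variable {s c : ℝ} {p : ℚ}

lemma eigenmap_apply (l : ℝ →ₗ[ℚ] ℝ) (u : ℝ) : eigenmap s c l u = l (s * u) + c * l u :=
  rfl

lemma eigenmap_mul (hs : s ^ 2 = p) (hc : c ^ 2 = p) (l : ℝ →ₗ[ℚ] ℝ) (u : ℝ) :
    eigenmap s c l (s * u) = c * eigenmap s c l u := by
  have hl : l (s * (s * u)) = c ^ 2 * l u := by
    rw [← mul_assoc, ← sq, hs, hc, ← Rat.smul_def, map_smul, Rat.smul_def]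
  rw [eigenmap_apply, eigenmap_apply, hl]
  ring

lemma map_add_mul_mul {U : ℝ →ₗ[ℚ] ℝ} (hU : ∀ u, U (s * u) = c * U u) (a b : ℚ) (u : ℝ) :
    U ((a + b * s) * u) = (a + b * c) * U u := by
  have hsplit : (a + b * s) * u = a • u + b • (s * u) := by
    rw [Rat.smul_def, Rat.smul_def]
    ring
  rw [hsplit, map_add, map_smul, map_smul, hU, Rat.smul_def, Rat.smul_def]
  ring

lemma linearIndependent_one_irrational (hs : Irrational s) : LinearIndependent ℚ ![1, s] :=
  (LinearIndependent.pair_iff' one_ne_zero).2 fun q hq => hs ⟨q, by simpa [Rat.smul_def] using hq⟩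

lemma linearIndependent_cons_one_irrational (hs : Irrational s) {z : ℝ}
    (hz : ¬∃ e f : ℚ, z = e + f * s) : LinearIndependent ℚ ![z, 1, s] := by
  refine linearIndependent_finCons.2 ⟨linearIndependent_one_irrational hs, fun hmem => hz ?_⟩
  rw [Matrix.range_cons_cons_empty, Submodule.mem_span_pair] at hmem
  obtain ⟨e, f, hef⟩ := hmem
  exact ⟨e, f, by simpa [Rat.smul_def] using hef.symm⟩

lemma exists_eigenmap_one_eq (hirr : Irrational s) (α β : ℝ) :
    ∃ l : ℝ →ₗ[ℚ] ℝ, eigenmap s s l 1 = α ∧ eigenmap s (-s) l 1 = β := by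
  obtain ⟨l, hl⟩ := exists_linearMap_apply_eq (linearIndependent_one_irrational hirr)
    ![(α - β) / (2 * s), (α + β) / 2]
  have hl1 : l 1 = (α - β) / (2 * s) := hl 0
  have hls : l s = (α + β) / 2 := hl 1
  have hs0 := hirr.ne_zero
  refine ⟨l, ?_, ?_⟩ <;>
  · rw [eigenmap_apply, mul_one, hls, hl1]
    field_simp
    ring

/-- The symmetric `ℚ`-bilinear form `δ (U u U v - V u V v) + κ (U u V v + V u U v)`. It is used with
`U` and `V` intertwining multiplication by `s` with multiplication by `s` and `-s`, respectively. -/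
noncomputable def conjForm (U V : ℝ →ₗ[ℚ] ℝ) (δ κ : ℝ) : ℝ →ₗ[ℚ] ℝ →ₗ[ℚ] ℝ :=
  let m := LinearMap.mul ℚ ℝ
  δ • (m.compl₁₂ U U - m.compl₁₂ V V) + κ • (m.compl₁₂ U V + m.compl₁₂ V U)

variable {U V : ℝ →ₗ[ℚ] ℝ} {δ κ : ℝ}

lemma conjForm_apply (u v : ℝ) :
    conjForm U V δ κ u v = δ * (U u * U v - V u * V v) + κ * (U u * V v + V u * U v) :=
  rfl

lemma conjForm_comm (u v : ℝ) : conjForm U V δ κ u v = conjForm U V δ κ v u := by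
  rw [conjForm_apply, conjForm_apply]
  ring

lemma conjForm_add_mul_mul_self (hU : ∀ u, U (s * u) = s * U u) (hV : ∀ u, V (s * u) = -s * V u)
    (a b : ℚ) (u : ℝ) :
    conjForm U V δ κ ((a + b * s) * u) u =
      δ * (b * s + a) * U u ^ 2 + 2 * κ * a * (U u * V u) + δ * (b * s - a) * V u ^ 2 := by
  rw [conjForm_apply, map_add_mul_mul hU, map_add_mul_mul hV]
  ring

lemma quadratic_form_nonneg {α β γ : ℝ} (hα : 0 ≤ α) (hγ : 0 ≤ γ) (h : β ^ 2 ≤ 4 * α * γ)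
    (X Y : ℝ) : 0 ≤ α * X ^ 2 + β * (X * Y) + γ * Y ^ 2 := by
  rcases hα.eq_or_lt with rfl | hα
  · have hβ : β = 0 := by
      rw [mul_zero, zero_mul] at h
      exact pow_eq_zero_iff two_ne_zero |>.1 (h.antisymm (sq_nonneg β))
    rw [hβ, zero_mul, zero_mul, zero_add, zero_add]
    positivity
  · have hsq : 4 * α * (α * X ^ 2 + β * (X * Y) + γ * Y ^ 2) =
        (2 * α * X + β * Y) ^ 2 + (4 * α * γ - β ^ 2) * Y ^ 2 := by ring
    refine nonneg_of_mul_nonneg_right (a := 4 * α) ?_ (by positivity)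
    rw [hsq]
    exact add_nonneg (sq_nonneg _) (mul_nonneg (sub_nonneg.2 h) (sq_nonneg _))

lemma conjForm_add_mul_mul_self_nonneg (hU : ∀ u, U (s * u) = s * U u)
    (hV : ∀ u, V (s * u) = -s * V u) (hδ : 0 ≤ δ) {a b : ℚ} (hab : |(a : ℝ)| ≤ b * s)
    (hκ : (κ * a) ^ 2 ≤ δ ^ 2 * ((b * s) ^ 2 - a ^ 2)) (u : ℝ) :
    0 ≤ conjForm U V δ κ ((a + b * s) * u) u := by
  obtain ⟨h₁, h₂⟩ := abs_le.1 hab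
  rw [conjForm_add_mul_mul_self hU hV]
  exact quadratic_form_nonneg (mul_nonneg hδ (by linarith)) (mul_nonneg hδ (by linarith))
    (by linear_combination 4 * hκ) _ _

end ConjugationForms

namespace Tileable

variable {S : Set ℝ} {s z : ℝ} {p : ℚ}

lemma conjForm_nonneg (H : Tileable S z 1) {U V : ℝ →ₗ[ℚ] ℝ} (hU : ∀ u, U (s * u) = s * U u)
    (hV : ∀ u, V (s * u) = -s * V u) {δ κ : ℝ} (hδ : 0 ≤ δ)
    (hS : ∀ r ∈ S, ∃ a b : ℚ, r = a + b * s ∧ |(a : ℝ)| ≤ b * s ∧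
      (κ * a) ^ 2 ≤ δ ^ 2 * ((b * s) ^ 2 - a ^ 2)) :
    0 ≤ conjForm U V δ κ z 1 := by
  refine H.bilin_nonneg _ fun u v _ hv huv => ?_
  obtain ⟨a, b, hr, hab, hκ⟩ := hS _ huv
  have hnonneg := conjForm_add_mul_mul_self_nonneg hU hV hδ hab hκ v
  rw [← hr, div_mul_cancel₀ u hv.ne'] at hnonneg
  exact ⟨hnonneg, by rwa [conjForm_comm]⟩

theorem exists_eq_add_mul (H : Tileable S z 1) (hs : 0 < s) (hsp : s ^ 2 = p)
    (hirr : Irrational s) (hS : ∀ r ∈ S, ∃ a b : ℚ, r = a + b * s ∧ |(a : ℝ)| ≤ b * s) :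
    ∃ e f : ℚ, z = e + f * s := by
  by_contra hz
  obtain ⟨l, hl⟩ := exists_linearMap_apply_eq (linearIndependent_cons_one_irrational hirr hz)
    ![(-1 : ℝ), 0, 1]
  have hlz : l z = -1 := hl 0
  have hl1 : l 1 = 0 := hl 1
  have hls : l s = 1 := hl 2
  have hnonneg : 0 ≤ conjForm (eigenmap s s l) (eigenmap s (-s) l) 1 0 z 1 := by
    refine H.conjForm_nonneg (eigenmap_mul hsp hsp l)
      (eigenmap_mul hsp ((neg_sq s).trans hsp) l) zero_le_one fun r hr => ?_
    obtain ⟨a, b, hr, hab⟩ := hS r hr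
    refine ⟨a, b, hr, hab, ?_⟩
    simpa using sq_le_sq.2 (hab.trans (le_abs_self _))
  simp only [conjForm_apply, eigenmap_apply, mul_one, hlz, hl1, hls] at hnonneg
  linarith

lemma conjugate_quadratic_nonneg (hs : s ^ 2 = p) (hirr : Irrational s) {e f : ℚ}
    (H : Tileable S (e + f * s) 1) {δ κ : ℝ} (hδ : 0 ≤ δ)
    (hS : ∀ r ∈ S, ∃ a b : ℚ, r = a + b * s ∧ |(a : ℝ)| ≤ b * s ∧
      (κ * a) ^ 2 ≤ δ ^ 2 * ((b * s) ^ 2 - a ^ 2)) (α β : ℝ) :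
    0 ≤ δ * (f * s + e) * α ^ 2 + 2 * κ * e * (α * β) + δ * (f * s - e) * β ^ 2 := by
  obtain ⟨l, hα, hβ⟩ := exists_eigenmap_one_eq hirr α β
  have hU := eigenmap_mul hs hs l
  have hV := eigenmap_mul hs ((neg_sq s).trans hs) l
  have hnonneg := H.conjForm_nonneg hU hV hδ hS
  rwa [← mul_one (e + f * s : ℝ), conjForm_add_mul_mul_self hU hV, hα, hβ] at hnonneg

theorem sub_mul_nonpos (hs : s ^ 2 = p) (hirr : Irrational s) {e f : ℚ}
    (H : Tileable S (e + f * s) 1)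
    (hS : ∀ r ∈ S, ∃ a b : ℚ, r = a + b * s ∧ |(a : ℝ)| ≤ b * s) : (e : ℝ) - f * s ≤ 0 := by
  have hnonneg := H.conjugate_quadratic_nonneg hs hirr (δ := 1) (κ := 0) zero_le_one (fun r hr => by
    obtain ⟨a, b, hr, hab⟩ := hS r hr
    exact ⟨a, b, hr, hab, by simpa using sq_le_sq.2 (hab.trans (le_abs_self _))⟩) 0 1
  linear_combination hnonneg

theorem mul_sq_le (hs : s ^ 2 = p) (hirr : Irrational s) {e f : ℚ}
    (H : Tileable S (e + f * s) 1) {δ κ : ℝ} (hδ : 0 ≤ δ)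
    (hS : ∀ r ∈ S, ∃ a b : ℚ, r = a + b * s ∧ |(a : ℝ)| ≤ b * s ∧
      (κ * a) ^ 2 ≤ δ ^ 2 * ((b * s) ^ 2 - a ^ 2)) :
    (κ * e) ^ 2 ≤ δ ^ 2 * ((f * s) ^ 2 - e ^ 2) := by
  have hdiscrim : discrim (δ * (f * s + e)) (2 * κ * e) (δ * (f * s - e)) ≤ 0 :=
    discrim_le_zero fun t => by
      linear_combination H.conjugate_quadratic_nonneg hs hirr hδ hS t 1
  rw [discrim] at hdiscrim
  linear_combination hdiscrim / 4

theorem abs_mul_le (hs : 0 < s) (hsp : s ^ 2 = p) (hirr : Irrational s) {e f : ℚ} (hf : 0 < f)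
    (H : Tileable S (e + f * s) 1) {a₀ b₀ : ℚ} (hab₀ : |(a₀ : ℝ)| ≤ b₀ * s)
    (hS : ∀ r ∈ S, ∃ a b : ℚ, r = a + b * s ∧ |(a : ℝ)| ≤ b * s ∧ |a| * b₀ ≤ |a₀| * b) :
    |e| * b₀ ≤ |a₀| * f := by
  have hb₀ : 0 ≤ b₀ := by
    exact_mod_cast nonneg_of_mul_nonneg_left ((abs_nonneg _).trans hab₀) hs
  have hκ : √((b₀ * s) ^ 2 - a₀ ^ 2) ^ 2 = (b₀ * s) ^ 2 - a₀ ^ 2 :=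
    Real.sq_sqrt (sub_nonneg.2 (sq_le_sq.2 (hab₀.trans (le_abs_self _))))
  have hbound := H.mul_sq_le hsp hirr (δ := |(a₀ : ℝ)|) (κ := √((b₀ * s) ^ 2 - a₀ ^ 2))
    (abs_nonneg _) fun r hr => by
      obtain ⟨a, b, hr, hab, hle⟩ := hS r hr
      refine ⟨a, b, hr, hab, ?_⟩
      have hsq : (a * b₀ : ℝ) ^ 2 ≤ (a₀ * b) ^ 2 := by
        have hle' : |a * b₀| ≤ |a₀ * b| := by
          rw [abs_mul, abs_mul, abs_of_nonneg hb₀]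
          exact hle.trans (mul_le_mul_of_nonneg_left (le_abs_self b) (abs_nonneg _))
        exact_mod_cast sq_le_sq.2 hle'
      rw [mul_pow, hκ, sq_abs]
      linear_combination s ^ 2 * hsq
  have hsq : s ^ 2 * (e * b₀) ^ 2 ≤ s ^ 2 * (a₀ * f) ^ 2 := by
    rw [mul_pow, hκ, sq_abs] at hbound
    linear_combination hbound
  have hle : (e * b₀) ^ 2 ≤ (a₀ * f) ^ 2 := by
    exact_mod_cast le_of_mul_le_mul_left hsq (by positivity)
  simpa only [abs_mul, abs_of_nonneg hb₀, abs_of_pos hf] using sq_le_sq.1 hle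

lemma neg_add_mul (hsp : s ^ 2 = p) {a b : ℚ} (H : Tileable S (a + b * s) 1)
    (hneg : (a : ℝ) - b * s < 0) : Tileable S (-a + b * s) 1 := by
  have hpos := H.width_pos
  have hnorm : ((p * b ^ 2 - a ^ 2 : ℚ) : ℝ) = (-a + b * s) * (a + b * s) := by
    push_cast
    rw [← hsp]
    ring
  have hq : 0 < p * b ^ 2 - a ^ 2 := by
    rw [← Rat.cast_pos (K := ℝ), hnorm]
    exact mul_pos (by linarith) hpos
  have hinv := H.inv.ratCast_mul hq
  rwa [hnorm, mul_inv_cancel_right₀ hpos.ne'] at hinv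

theorem add_mul_of_abs_div_le (hsp : s ^ 2 = p) {a b e f : ℚ} (H : Tileable S (a + b * s) 1)
    (hneg : (a : ℝ) - b * s < 0) (hb : 0 < b) (hf : 0 < f) (h : |e| / f ≤ |a| / b) :
    Tileable S (e + f * s) 1 := by
  rw [div_le_div_iff₀ hf hb] at h
  -- For `a = 0` the hypothesis forces `e = 0`, so the convention `e / 0 = 0` is harmless.
  have hae : e / a * a = e := by
    refine div_mul_cancel_of_imp fun ha => ?_
    rw [ha, abs_zero, zero_mul] at h
    exact abs_nonpos_iff.1 (nonpos_of_mul_nonpos_left h hb)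
  have hea : |e / a| ≤ f / b := by
    rw [abs_div, le_div_iff₀ hb, div_mul_eq_mul_div]
    exact div_le_of_le_mul₀ (abs_nonneg _) hf.le (by rwa [mul_comm f])
  obtain ⟨h₁, h₂⟩ := abs_le.1 hea
  have hcomb := H.ratCast_mul_add_ratCast_mul (H.neg_add_mul hsp hneg)
    (q := (f / b + e / a) / 2) (q' := (f / b - e / a) / 2) (by linarith) (by linarith)
    (by linarith [div_pos hf hb])
  convert hcomb using 1
  have hae' : (e / a * a : ℝ) = e := by exact_mod_cast hae
  have hfb : (f / b * b : ℝ) = f := div_mul_cancel₀ _ (by exact_mod_cast hb.ne')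
  push_cast
  linear_combination -hae' - s * hfb

theorem exists_abs_div_le {ι : Type*} {a b : ι → ℚ} {x : ι → ℝ} (hs : 0 < s) (hsp : s ^ 2 = p)
    (hirr : Irrational s) (hx : ∀ i, x i = a i + b i * s) (hb : ∀ i, 0 < b i)
    (hab : ∀ i, |(a i : ℝ)| ≤ b i * s) (H : Tileable (range x) z 1) :
    ∃ e f : ℚ, z = e + f * s ∧ 0 < f ∧ ∃ i, |e| / f ≤ |a i| / b i := by
  obtain ⟨t, ht, Ht⟩ := H.exists_finset_image
  obtain ⟨k, -, hk⟩ := t.exists_max_image (fun i => |a i| / b i) ht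
  have hS : ∀ r ∈ x '' t, ∃ a' b' : ℚ, r = a' + b' * s ∧ |(a' : ℝ)| ≤ b' * s ∧
      |a'| * b k ≤ |a k| * b' := by
    rintro _ ⟨i, hi, rfl⟩
    exact ⟨a i, b i, hx i, hab i, (div_le_div_iff₀ (hb i) (hb k)).1 (hk i hi)⟩
  have hS' : ∀ r ∈ x '' t, ∃ a' b' : ℚ, r = a' + b' * s ∧ |(a' : ℝ)| ≤ b' * s := fun r hr =>
    (hS r hr).imp fun a' => Exists.imp fun b' h => ⟨h.1, h.2.1⟩
  obtain ⟨e, f, rfl⟩ := Ht.exists_eq_add_mul hs hsp hirr hS'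
  have hf : 0 < f := by
    have hfs : 0 < f * s := by linarith [Ht.width_pos, Ht.sub_mul_nonpos hsp hirr hS']
    exact_mod_cast pos_of_mul_pos_left hfs hs.le
  exact ⟨e, f, rfl, hf, k, (div_le_div_iff₀ hf (hb k)).2 (Ht.abs_mul_le hs hsp hirr hf (hab k) hS)⟩

end Tileable

theorem stmt_2_general (p : ℚ) (hirr : Irrational (Real.sqrt p)) {ι : Type*} (a b : ι → ℚ)
    (x : ι → ℝ) (hx : ∀ i, x i = (a i : ℝ) + (b i : ℝ) * Real.sqrt p) (hxpos : ∀ i, 0 < x i)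
    (hconj : ∀ i, (a i : ℝ) - (b i : ℝ) * Real.sqrt p < 0) (z : ℝ) :
    z ∈ BSet (range x) ↔ ∃ e f : ℚ, z = (e : ℝ) + (f : ℝ) * Real.sqrt p ∧ 0 < f ∧
      ∃ i, |e| / f ≤ |a i| / b i := by
  have hs : 0 < √(p : ℝ) := (Real.sqrt_nonneg _).lt_of_ne' hirr.ne_zero
  have hsp : √(p : ℝ) ^ 2 = p := Real.sq_sqrt (Real.sqrt_pos.1 hs).le
  have hpos (i : ι) : 0 < (a i : ℝ) + b i * √p := hx i ▸ hxpos i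
  have hb (i : ι) : 0 < b i := by
    have hbs : 0 < b i * √p := by linarith [hpos i, hconj i]
    exact_mod_cast pos_of_mul_pos_left hbs hs.le
  rw [mem_BSet_iff_tileable]
  constructor
  · exact Tileable.exists_abs_div_le hs hsp hirr hx hb fun i =>
      abs_le.2 ⟨by linarith [hpos i], by linarith [hconj i]⟩
  · rintro ⟨e, f, rfl, hf, i, hi⟩
    have H : Tileable (range x) (a i + b i * √p) 1 := Tileable.of_mem (hpos i) ⟨i, hx i⟩
    exact H.add_mul_of_abs_div_le hsp (hconj i) (hb i) hf hi

/-- Theorem 1(3): if all conjugates are negative, then `B(x₁, …, xₙ)` is the set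
`N(x₁, …, xₙ)` of numbers `e + f√p` with `f > 0` and `|e|/f ≤ max |aᵢ|/bᵢ`. -/
theorem stmt_2 (p : ℚ) (hp : 0 < p) (hirr : Irrational (Real.sqrt p))
    (n : ℕ) (hn : 0 < n) (a b : Fin n → ℚ) (x : Fin n → ℝ)
    (hx : ∀ i, x i = (a i : ℝ) + (b i : ℝ) * Real.sqrt p)
    (hxpos : ∀ i, 0 < x i)
    (hconj : ∀ i, (a i : ℝ) - (b i : ℝ) * Real.sqrt p < 0)
    (z : ℝ) (hz : 0 < z) :
    z ∈ BSet (Set.range x) ↔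
      ∃ e f : ℚ, z = (e : ℝ) + (f : ℝ) * Real.sqrt p ∧ 0 < f ∧
        |e| / f ≤ Finset.univ.sup' (Finset.univ_nonempty_iff.mpr
          (Fin.pos_iff_nonempty.mp hn)) (fun i => |a i| / b i) := by
  simpa only [Finset.le_sup'_iff, Finset.mem_univ, true_and] using
    stmt_2_general p hirr a b x hx hxpos hconj z
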